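/- arXiv:1410.4315 — 2 statements merged into one kernel-verified Lean document; each statement's English description precedes it below -/
import Mathlib

section
/- Let n ∈ ℕ, σ ∈ {0,1}^n, and let μ_{j,m} be the Haar coefficients of the local discrepancy of the digit shifted Hammersley point set R_{n,σ} with N = 2^n points. If j = (j_1,j_2) ∈ ℕ_0^2 with j_1 ≥ n or j_2 ≥ n, then |μ_{j,m}| = 2^{−2(j_1+j_2+2)} for all m ∈ D_j. -/
open MeasureTheory

/-- The real value of a binary digit. -/
noncomputable def bval (b : Bool) : ℝ := if b then 1 else 0

/-- The two-dimensional digit shifted Hammersley point set with `2^n` points,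
indexed by the digit vectors `t : Fin n → Bool`.  The index `i : Fin n`
corresponds to the digit `t_{i+1}` of the paper. -/
noncomputable def hammersleyShifted (n : ℕ) (σ : Fin n → Bool) (t : Fin n → Bool) : ℝ × ℝ :=
  (∑ i : Fin n, bval (t i) / 2 ^ (n - i.val),
   ∑ i : Fin n, bval (t i != σ i) / 2 ^ (i.val + 1))

/-- Number of points of the (indexed) point set `P` lying in `[0,t₁) × [0,t₂)`. -/
noncomputable def countIn {ι : Type*} [Fintype ι] (P : ι → ℝ × ℝ) (t : ℝ × ℝ) : ℕ :=
  (Finset.univ.filter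
    (fun k => 0 ≤ (P k).1 ∧ (P k).1 < t.1 ∧ 0 ≤ (P k).2 ∧ (P k).2 < t.2)).card

/-- The local discrepancy `D_N(P,t) = A_N([0,t),P)/N - t₁t₂` of an indexed point set. -/
noncomputable def localDisc {ι : Type*} [Fintype ι] (P : ι → ℝ × ℝ) (t : ℝ × ℝ) : ℝ :=
  (countIn P t : ℝ) / (Fintype.card ι) - t.1 * t.2

/-- The `L_p`-discrepancy of an indexed point set. -/
noncomputable def LpDisc (p : ℝ) {ι : Type*} [Fintype ι] (P : ι → ℝ × ℝ) : ℝ :=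
  (∫ t in Set.Icc (0 : ℝ × ℝ) 1, |localDisc P t| ^ p) ^ (1 / p)

/-- One-dimensional `L∞`-normalized Haar function `h_{j,m}`, with `j ∈ ℤ`, `j = -1`
giving the indicator of `[0,1)` and `j ≥ 0` the usual Haar function on `I_{j,m}`. -/
noncomputable def haar1 (j : ℤ) (m : ℕ) (x : ℝ) : ℝ :=
  if j = -1 then (if 0 ≤ x ∧ x < 1 then 1 else 0)
  else if (2 * m : ℝ) / 2 ^ (j.toNat + 1) ≤ x ∧ x < (2 * m + 1 : ℝ) / 2 ^ (j.toNat + 1) then 1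
  else if (2 * m + 1 : ℝ) / 2 ^ (j.toNat + 1) ≤ x ∧ x < (2 * m + 2 : ℝ) / 2 ^ (j.toNat + 1) then -1
  else 0

/-- Two-dimensional (tensor product) Haar function. -/
noncomputable def haar2 (j : ℤ × ℤ) (m : ℕ × ℕ) (x : ℝ × ℝ) : ℝ :=
  haar1 j.1 m.1 x.1 * haar1 j.2 m.2 x.2

/-- One-dimensional dyadic interval `I_{j,m}` (with `I_{-1,0} = [0,1)`). -/
noncomputable def dyadicI (j : ℤ) (m : ℕ) : Set ℝ :=
  if j = -1 then Set.Ico (0 : ℝ) 1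
  else Set.Ico ((m : ℝ) / 2 ^ j.toNat) ((m + 1 : ℝ) / 2 ^ j.toNat)


lemma haar1_eq (j m : ℕ) (f : ℝ → ℝ) (x : ℝ) :
    f x * haar1 (j : ℤ) m x =
      (Set.Ico ((2 * m : ℝ) / 2 ^ (j + 1)) ((2 * m + 1 : ℝ) / 2 ^ (j + 1))).indicator f x -
      (Set.Ico ((2 * m + 1 : ℝ) / 2 ^ (j + 1)) ((2 * m + 2 : ℝ) / 2 ^ (j + 1))).indicator f x := by
  have h1 : ¬ ((j : ℤ) = -1) := by omega
  unfold haar1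
  rw [if_neg h1]
  simp only [Int.toNat_natCast, Set.indicator, Set.mem_Ico]
  split_ifs with h2 h3
  · exact absurd h3.1 (not_le.mpr h2.2)
  · ring
  · ring
  · ring

lemma int_haar1 (j m : ℕ) (hm : m < 2 ^ j) (f : ℝ → ℝ) (hf : IntegrableOn f (Set.Icc 0 1)) :
    IntegrableOn (fun x => f x * haar1 (j : ℤ) m x) (Set.Icc 0 1) ∧
    ∫ x in Set.Icc (0 : ℝ) 1, f x * haar1 (j : ℤ) m x =
      (∫ x in ((2 * m : ℝ) / 2 ^ (j + 1))..((2 * m + 1 : ℝ) / 2 ^ (j + 1)), f x) -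
      ∫ x in ((2 * m + 1 : ℝ) / 2 ^ (j + 1))..((2 * m + 2 : ℝ) / 2 ^ (j + 1)), f x := by
  have hp : (0 : ℝ) < 2 ^ (j + 1) := by positivity
  have hc : (2 * m + 2 : ℝ) / 2 ^ (j + 1) ≤ 1 := by
    rw [div_le_one hp, pow_succ]
    have : ((m + 1 : ℕ) : ℝ) ≤ ((2 ^ j : ℕ) : ℝ) := by exact_mod_cast hm
    push_cast at this
    linarith
  have ha : (0 : ℝ) ≤ (2 * m : ℝ) / 2 ^ (j + 1) := by positivity
  have hab : (2 * m : ℝ) / 2 ^ (j + 1) ≤ (2 * m + 1 : ℝ) / 2 ^ (j + 1) := by gcongr; linarith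
  have hbc : (2 * m + 1 : ℝ) / 2 ^ (j + 1) ≤ (2 * m + 2 : ℝ) / 2 ^ (j + 1) := by
    gcongr; linarith
  simp_rw [haar1_eq]
  generalize (2 * m : ℝ) / 2 ^ (j + 1) = a at *
  generalize (2 * m + 1 : ℝ) / 2 ^ (j + 1) = b at *
  generalize (2 * m + 2 : ℝ) / 2 ^ (j + 1) = c at *
  have i1 : IntegrableOn ((Set.Ico a b).indicator f) (Set.Icc 0 1) :=
    Integrable.indicator hf measurableSet_Ico
  have i2 : IntegrableOn ((Set.Ico b c).indicator f) (Set.Icc 0 1) :=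
    Integrable.indicator hf measurableSet_Ico
  refine ⟨i1.sub i2, ?_⟩
  rw [integral_sub i1 i2, setIntegral_indicator measurableSet_Ico,
    setIntegral_indicator measurableSet_Ico, intervalIntegral.integral_of_le hab,
    intervalIntegral.integral_of_le hbc,
    Set.inter_eq_right.mpr, Set.inter_eq_right.mpr, integral_Ico_eq_integral_Ioc,
    integral_Ico_eq_integral_Ioc]
  · intro x hx; exact ⟨by linarith [hx.1], by linarith [hx.2]⟩
  · intro x hx; exact ⟨by linarith [hx.1], by linarith [hx.2]⟩

/-- step function -/
noncomputable def stepF (z t : ℝ) : ℝ := if 0 ≤ z ∧ z < t then 1 else 0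

lemma stepF_int (z : ℝ) : IntegrableOn (stepF z) (Set.Icc 0 1) := by
  by_cases hz : 0 ≤ z
  · have : stepF z = (Set.Ioi z).indicator (fun _ => (1 : ℝ)) := by
      ext t; simp [stepF, hz, Set.indicator]
    rw [this]
    exact Integrable.indicator (by simp) measurableSet_Ioi
  · have : stepF z = fun _ => (0 : ℝ) := by
      ext t; simp [stepF, hz]
    rw [this]; simp

lemma step_haar (n j m : ℕ) (hm : m < 2 ^ j) (hn : n ≤ j) (z : ℝ) (k : ℕ)
    (hz : z * 2 ^ n = k) :
    ∫ x in Set.Icc (0 : ℝ) 1, stepF z x * haar1 (j : ℤ) m x = 0 := by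
  rw [(int_haar1 j m hm _ (stepF_int z)).2]
  have hp : (0 : ℝ) < 2 ^ (j + 1) := by positivity
  have hz' : z = ((2 * (k * 2 ^ (j - n)) : ℕ) : ℝ) / 2 ^ (j + 1) := by
    rw [eq_div_iff hp.ne']
    push_cast
    rw [← hz]
    obtain ⟨d, rfl⟩ := Nat.exists_eq_add_of_le hn
    simp only [Nat.add_sub_cancel_left]
    ring
  have hz0 : 0 ≤ z := by rw [hz']; positivity
  have hab : (2 * m : ℝ) / 2 ^ (j + 1) ≤ (2 * m + 1 : ℝ) / 2 ^ (j + 1) := by gcongr; linarith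
  have hbc : (2 * m + 1 : ℝ) / 2 ^ (j + 1) ≤ (2 * m + 2 : ℝ) / 2 ^ (j + 1) := by
    gcongr; linarith
  have hconst : ∃ C : ℝ, ∀ x, (2 * m : ℝ) / 2 ^ (j + 1) < x → x ≤ (2 * m + 2 : ℝ) / 2 ^ (j + 1) →
      stepF z x = C := by
    generalize k * 2 ^ (j - n) = K at hz'
    rcases le_or_gt K m with h | h
    · refine ⟨1, fun x hx _ => ?_⟩
      have : z ≤ (2 * m : ℝ) / 2 ^ (j + 1) := by
        rw [hz']
        push_cast
        have : (K : ℝ) ≤ m := by exact_mod_cast h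
        gcongr
      simp [stepF, hz0, lt_of_le_of_lt this hx]
    · refine ⟨0, fun x _ hx => ?_⟩
      have : (2 * m + 2 : ℝ) / 2 ^ (j + 1) ≤ z := by
        rw [hz']
        push_cast
        have : (m : ℝ) + 1 ≤ K := by exact_mod_cast h
        gcongr
        linarith
      simp [stepF, hz0]
      linarith
  obtain ⟨C, hC⟩ := hconst
  have e1 : ∫ x in ((2 * m : ℝ) / 2 ^ (j + 1))..((2 * m + 1 : ℝ) / 2 ^ (j + 1)), stepF z x =
      ∫ x in ((2 * m : ℝ) / 2 ^ (j + 1))..((2 * m + 1 : ℝ) / 2 ^ (j + 1)), C := by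
    rw [intervalIntegral.integral_of_le hab, intervalIntegral.integral_of_le hab]
    exact setIntegral_congr_fun measurableSet_Ioc fun x hx => hC x hx.1 (hx.2.trans hbc)
  have e2 : ∫ x in ((2 * m + 1 : ℝ) / 2 ^ (j + 1))..((2 * m + 2 : ℝ) / 2 ^ (j + 1)), stepF z x =
      ∫ x in ((2 * m + 1 : ℝ) / 2 ^ (j + 1))..((2 * m + 2 : ℝ) / 2 ^ (j + 1)), C := by
    rw [intervalIntegral.integral_of_le hbc, intervalIntegral.integral_of_le hbc]
    exact setIntegral_congr_fun measurableSet_Ioc fun x hx => hC x (hab.trans_lt hx.1) hx.2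
  rw [e1, e2]
  simp only [intervalIntegral.integral_const, smul_eq_mul]
  ring

lemma id_int : IntegrableOn (fun x : ℝ => x) (Set.Icc 0 1) :=
  continuous_id.continuousOn.integrableOn_compact isCompact_Icc

lemma id_haar (j m : ℕ) (hm : m < 2 ^ j) :
    ∫ x in Set.Icc (0 : ℝ) 1, x * haar1 (j : ℤ) m x = - (1 / 2 ^ (2 * (j + 1))) := by
  rw [(int_haar1 j m hm (fun x => x) id_int).2, integral_id, integral_id]
  have hp : (2 : ℝ) ^ (j + 1) ≠ 0 := by positivity
  rw [mul_comm 2 (j + 1), pow_mul]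
  field_simp
  ring

lemma fst_dyadic (n : ℕ) (σ t : Fin n → Bool) :
    ∃ k : ℕ, (hammersleyShifted n σ t).1 * 2 ^ n = k := by
  refine ⟨∑ i : Fin n, (if t i then 1 else 0) * 2 ^ i.val, ?_⟩
  simp only [hammersleyShifted, Finset.sum_mul]
  push_cast
  refine Finset.sum_congr rfl fun i _ => ?_
  have : (2 : ℝ) ^ n = 2 ^ (n - i.val) * 2 ^ i.val := by
    rw [← pow_add]; congr 1; omega
  rw [this, bval]
  field_simp

lemma snd_dyadic (n : ℕ) (σ t : Fin n → Bool) :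
    ∃ k : ℕ, (hammersleyShifted n σ t).2 * 2 ^ n = k := by
  refine ⟨∑ i : Fin n, (if (t i != σ i) then 1 else 0) * 2 ^ (n - (i.val + 1)), ?_⟩
  simp only [hammersleyShifted, Finset.sum_mul]
  push_cast
  refine Finset.sum_congr rfl fun i _ => ?_
  have : (2 : ℝ) ^ n = 2 ^ (i.val + 1) * 2 ^ (n - (i.val + 1)) := by
    rw [← pow_add]; congr 1; omega
  rw [this, bval]
  field_simp

lemma disc_eq {ι : Type*} [Fintype ι] (P : ι → ℝ × ℝ) (j m : ℕ × ℕ) (t : ℝ × ℝ) :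
    localDisc P t * haar2 ((j.1 : ℤ), (j.2 : ℤ)) m t =
      (∑ k, (1 / (Fintype.card ι : ℝ)) * ((stepF (P k).1 t.1 * haar1 (j.1 : ℤ) m.1 t.1) *
        (stepF (P k).2 t.2 * haar1 (j.2 : ℤ) m.2 t.2))) -
      (t.1 * haar1 (j.1 : ℤ) m.1 t.1) * (t.2 * haar1 (j.2 : ℤ) m.2 t.2) := by
  have h : (countIn P t : ℝ) = ∑ k, stepF (P k).1 t.1 * stepF (P k).2 t.2 := by
    unfold countIn
    rw [Finset.card_filter]
    push_cast
    refine Finset.sum_congr rfl fun k _ => ?_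
    simp only [stepF]
    split_ifs <;> first | tauto | simp
  unfold localDisc haar2
  rw [h, sub_mul, Finset.sum_div, Finset.sum_mul]
  congr 1
  · refine Finset.sum_congr rfl fun k _ => ?_
    ring
  · ring

lemma integrable_prod_aux (f g : ℝ → ℝ) (hf : IntegrableOn f (Set.Icc 0 1))
    (hg : IntegrableOn g (Set.Icc 0 1)) :
    IntegrableOn (fun t : ℝ × ℝ => f t.1 * g t.2) (Set.Icc (0 : ℝ × ℝ) 1) ∧
    ∫ t in Set.Icc (0 : ℝ × ℝ) 1, f t.1 * g t.2 =
      (∫ x in Set.Icc (0 : ℝ) 1, f x) * ∫ x in Set.Icc (0 : ℝ) 1, g x := by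
  have h : Set.Icc (0 : ℝ × ℝ) 1 = Set.Icc (0 : ℝ) 1 ×ˢ Set.Icc (0 : ℝ) 1 := by
    rw [Set.Icc_prod_Icc]; rfl
  rw [h]
  constructor
  · rw [IntegrableOn, Measure.volume_eq_prod, ← Measure.prod_restrict]
    exact Integrable.mul_prod hf hg
  · rw [Measure.volume_eq_prod]
    exact setIntegral_prod_mul f g _ _

/-- Haar coefficient `μ_{j,m} = ∫_{[0,1]²} D_N(P,t) h_{j,m}(t) dt` of the local
discrepancy of an indexed point set. -/
noncomputable def haarCoeff {ι : Type*} [Fintype ι] (P : ι → ℝ × ℝ) (j : ℤ × ℤ) (m : ℕ × ℕ) : ℝ :=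
  ∫ t in Set.Icc (0 : ℝ × ℝ) 1, localDisc P t * haar2 j m t

/-- Number of zero components of the shift `σ`. -/
noncomputable def zeroCount {n : ℕ} (σ : Fin n → Bool) : ℕ :=
  (Finset.univ.filter (fun j => σ j = false)).card

/-- The symmetrized digit shifted Hammersley point set `R_{n,σ} ∪ R_{n,σ⊕1}`
with `2^(n+1)` points, indexed by `Bool × (Fin n → Bool)`. -/
noncomputable def hammersleySym (n : ℕ) (σ : Fin n → Bool) :
    Bool × (Fin n → Bool) → ℝ × ℝ :=
  fun bt => if bt.1 then hammersleyShifted n (fun i => !(σ i)) bt.2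
            else hammersleyShifted n σ bt.2

/-- The multiset `R_{n,σ} ∪ {(x, 1-y) : (x,y) ∈ R_{n,σ}}` with `2^(n+1)` points
(counted with multiplicity), indexed by `Bool × (Fin n → Bool)`. -/
noncomputable def hammersleySymTilde (n : ℕ) (σ : Fin n → Bool) :
    Bool × (Fin n → Bool) → ℝ × ℝ :=
  fun bt => if bt.1 then ((hammersleyShifted n σ bt.2).1, 1 - (hammersleyShifted n σ bt.2).2)
            else hammersleyShifted n σ bt.2

/-- Haar coefficients of the local discrepancy of `R_{n,σ}` for `j ∈ ℕ₀²`
with `j₁ ≥ n` or `j₂ ≥ n`: `|μ_{j,m}| = 2^{-2(j₁+j₂+2)}`. -/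
theorem statement7 (n : ℕ) (hn : 0 < n) (σ : Fin n → Bool)
    (j1 j2 : ℕ) (hj : n ≤ j1 ∨ n ≤ j2)
    (m1 m2 : ℕ) (hm1 : m1 < 2 ^ j1) (hm2 : m2 < 2 ^ j2) :
    |haarCoeff (hammersleyShifted n σ) ((j1 : ℤ), (j2 : ℤ)) (m1, m2)| =
      1 / 2 ^ (2 * (j1 + j2 + 2)) := by
  have key : ∀ k, (∫ x in Set.Icc (0 : ℝ) 1,
        stepF (hammersleyShifted n σ k).1 x * haar1 (j1 : ℤ) m1 x) *
      (∫ x in Set.Icc (0 : ℝ) 1,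
        stepF (hammersleyShifted n σ k).2 x * haar1 (j2 : ℤ) m2 x) = 0 := by
    intro k
    rcases hj with hj | hj
    · obtain ⟨K, hK⟩ := fst_dyadic n σ k
      rw [step_haar n j1 m1 hm1 hj _ K hK, zero_mul]
    · obtain ⟨K, hK⟩ := snd_dyadic n σ k
      rw [step_haar n j2 m2 hm2 hj _ K hK, mul_zero]
  have hs := fun k => integrable_prod_aux _ _
    (int_haar1 j1 m1 hm1 _ (stepF_int (hammersleyShifted n σ k).1)).1
    (int_haar1 j2 m2 hm2 _ (stepF_int (hammersleyShifted n σ k).2)).1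
  have hi := integrable_prod_aux _ _ (int_haar1 j1 m1 hm1 _ id_int).1
    (int_haar1 j2 m2 hm2 _ id_int).1
  have hval : haarCoeff (hammersleyShifted n σ) ((j1 : ℤ), (j2 : ℤ)) (m1, m2) =
      - ((- (1 / 2 ^ (2 * (j1 + 1)))) * (- (1 / 2 ^ (2 * (j2 + 1))))) := by
    unfold haarCoeff
    simp_rw [disc_eq (hammersleyShifted n σ) (j1, j2) (m1, m2)]
    rw [integral_sub (integrable_finsetSum _ fun k _ => ((hs k).1.const_mul _)) hi.1,
      integral_finsetSum _ (fun k _ => ((hs k).1.const_mul _)), hi.2,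
      id_haar j1 m1 hm1, id_haar j2 m2 hm2]
    simp_rw [integral_const_mul, (hs _).2, key]
    simp
  rw [hval, abs_neg, neg_mul_neg, abs_of_nonneg (by positivity), one_div_mul_one_div, ← pow_add]
  congr 2
  ring
end

section
/- Let n ∈ ℕ, σ ∈ {0,1}^n, and let μ_{j,m} be the Haar coefficients of the local discrepancy of the digit shifted Hammersley point set R_{n,σ} with N = 2^n points. If j = (−1,k) or j = (k,−1) with k ∈ ℕ_0 and k < n, then |μ_{j,m}| ≤ 2^{−(n+k)} for all m ∈ D_j. -/
open MeasureTheory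

noncomputable def UU {L : ℕ} (b : Fin L → Bool) : ℝ := ∑ i : Fin L, bval (b i) / 2 ^ (i.val + 1)
noncomputable def WW {L : ℕ} (b : Fin L → Bool) : ℝ := ∑ i : Fin L, bval (b i) / 2 ^ (L - i.val)

lemma bval_nonneg' (b : Bool) : 0 ≤ bval b := by cases b <;> simp [bval]
lemma bval_not' (b : Bool) : bval (!b) = 1 - bval b := by cases b <;> simp [bval]

lemma WW_eq {L : ℕ} (b : Fin L → Bool) : WW b = UU (fun i => b i.rev) := by
  unfold WW UU
  rw [← Equiv.sum_comp Fin.revPerm]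
  refine Finset.sum_congr rfl fun i _ => ?_
  simp only [Fin.revPerm_apply, Fin.val_rev]
  congr 2
  omega

lemma UU_nonneg {L : ℕ} (b : Fin L → Bool) : 0 ≤ UU b :=
  Finset.sum_nonneg fun i _ => div_nonneg (bval_nonneg' _) (by positivity)

lemma geo_sum (L : ℕ) : ∑ i : Fin L, (1:ℝ) / 2 ^ (i.val + 1) = 1 - 1 / 2 ^ L := by
  rw [Fin.sum_univ_eq_sum_range (fun i => (1:ℝ) / 2 ^ (i + 1))]
  induction L with
  | zero => simp
  | succ n ih => rw [Finset.sum_range_succ, ih]; field_simp; ring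

lemma UU_not {L : ℕ} (b : Fin L → Bool) : UU (fun i => !(b i)) = 1 - 1 / 2 ^ L - UU b := by
  unfold UU
  rw [← geo_sum, ← Finset.sum_sub_distrib]
  refine Finset.sum_congr rfl fun i _ => ?_
  rw [bval_not', sub_div]

lemma UU_le {L : ℕ} (b : Fin L → Bool) : UU b ≤ 1 - 1 / 2 ^ L := by
  have := UU_not b
  have := UU_nonneg (fun i => !(b i))
  linarith

lemma WW_not {L : ℕ} (b : Fin L → Bool) : WW (fun i => !(b i)) = 1 - 1 / 2 ^ L - WW b := by
  rw [WW_eq, WW_eq, ← UU_not]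

lemma WW_nonneg {L : ℕ} (b : Fin L → Bool) : 0 ≤ WW b := by rw [WW_eq]; exact UU_nonneg _
lemma WW_le {L : ℕ} (b : Fin L → Bool) : WW b ≤ 1 - 1 / 2 ^ L := by rw [WW_eq]; exact UU_le _

lemma UU_append {k L : ℕ} (a : Fin k → Bool) (b : Fin L → Bool) :
    UU (Fin.append a b) = UU a + UU b / 2 ^ k := by
  unfold UU
  rw [Fin.sum_univ_add, Finset.sum_div]
  congr 1
  · simp
  · refine Finset.sum_congr rfl fun i _ => ?_
    rw [Fin.append_right, Fin.val_natAdd, div_div]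
    congr 1; ring

lemma WW_append {k L : ℕ} (a : Fin k → Bool) (b : Fin L → Bool) :
    WW (Fin.append a b) = WW a / 2 ^ L + WW b := by
  unfold WW
  rw [Fin.sum_univ_add, Finset.sum_div]
  congr 1
  · refine Finset.sum_congr rfl fun i _ => ?_
    rw [Fin.append_left, Fin.val_castAdd, div_div, ← pow_add]
    congr 2; omega
  · refine Finset.sum_congr rfl fun i _ => ?_
    rw [Fin.append_right, Fin.val_natAdd]
    congr 2; omega

/-- integer encoding -/
lemma exists_enc (L : ℕ) : ∃ e : (Fin L → Bool) ≃ Fin (2 ^ L), ∀ b, UU b = (e b : ℕ) / 2 ^ L := by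
  refine ⟨((Equiv.arrowCongr Fin.revPerm finTwoEquiv.symm).trans finFunctionFinEquiv), fun b => ?_⟩
  simp only [Equiv.trans_apply, finFunctionFinEquiv_apply]
  unfold UU
  rw [← Equiv.sum_comp Fin.revPerm]
  push_cast
  rw [Finset.sum_div]
  refine Finset.sum_congr rfl fun i _ => ?_
  have h1 : (((Equiv.arrowCongr Fin.revPerm finTwoEquiv.symm) b i : Fin 2) : ℕ) = (bval (b i.rev)) := by
    simp only [Equiv.arrowCongr_apply, Function.comp_apply]
    change (((finTwoEquiv.symm (b i.rev)) : ℕ) : ℝ) = _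
    cases b i.rev <;> simp [bval, finTwoEquiv]
  rw [h1]
  simp only [Fin.revPerm_apply, Fin.val_rev]
  have : (2:ℝ) ^ L = 2 ^ (i.val) * 2 ^ (L - (i.val + 1) + 1) := by
    rw [← pow_add]; congr 1; omega
  rw [this]
  field_simp

noncomputable def tent (u : ℝ) : ℝ := min u (1 - u)

lemma tent_lip (u d : ℝ) (hd : 0 ≤ d) : |tent (1 - d - u) - tent u| ≤ d := by
  unfold tent
  rw [abs_le]
  rcases min_cases u (1-u) with h | h <;> rcases min_cases (1 - d - u) (1-(1-d-u)) with h' | h' <;>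
   constructor <;> linarith [h.1, h.2, h'.1, h'.2]

lemma tent_sum (L : ℕ) (hL : 0 < L) : ∑ b : Fin L → Bool, tent (UU b) = 2 ^ L / 4 := by
  obtain ⟨L, rfl⟩ : ∃ l, L = l + 1 := ⟨L - 1, by omega⟩
  rw [← Equiv.sum_comp (Fin.consEquiv fun _ => Bool), Fintype.sum_prod_type, Fintype.sum_bool,
    ← Finset.sum_add_distrib]
  have : ∀ b : Fin L → Bool, tent (UU ((Fin.consEquiv fun _ => Bool) (true, b)))
      + tent (UU ((Fin.consEquiv fun _ => Bool) (false, b))) = 1 / 2 := by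
    intro b
    have h : ∀ c : Bool, UU ((Fin.consEquiv fun _ => Bool) (c, b)) = bval c / 2 + UU b / 2 := by
      intro c
      unfold UU
      rw [Fin.sum_univ_succ, Finset.sum_div]
      simp only [Fin.consEquiv_apply, Fin.cons_zero, Fin.cons_succ, Fin.val_zero, Fin.val_succ]
      congr 1
      · simp
      · refine Finset.sum_congr rfl fun i _ => ?_
        rw [div_div, pow_succ _ (i.val + 1)]
    rw [h, h]
    have h0 := UU_nonneg b
    have h1 := UU_le b
    have : (0:ℝ) < 1 / 2 ^ L := by positivity
    simp only [bval, tent, if_true, Bool.false_eq_true, if_false]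
    rw [min_eq_right (by linarith), min_eq_left (by linarith)]
    ring
  rw [Finset.sum_congr rfl fun b _ => this b]
  simp
  ring

def xorEquiv {L : ℕ} (β : Fin L → Bool) : (Fin L → Bool) ≃ (Fin L → Bool) where
  toFun b := fun i => b i != β i
  invFun b := fun i => b i != β i
  left_inv b := by funext i; simp
  right_inv b := by funext i; simp

def notEquiv (L : ℕ) : (Fin L → Bool) ≃ (Fin L → Bool) where
  toFun b := fun i => !(b i)
  invFun b := fun i => !(b i)
  left_inv b := by funext i; simp
  right_inv b := by funext i; simp

lemma inner_bound (L : ℕ) (hL : 0 < L) (β : Fin L → Bool) (c : ℝ) (hc0 : 0 ≤ c)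
    (hc : c ≤ 1 / 2 ^ L) :
    |∑ b : Fin L → Bool, (1 - c - WW b) * tent (UU (xorEquiv β b)) - 2 ^ L / 8| ≤ 1 := by
  set T := ∑ b : Fin L → Bool, (1 - c - WW b) * tent (UU (xorEquiv β b)) with hT
  have hs : ∑ b : Fin L → Bool, tent (UU (xorEquiv β b)) = 2 ^ L / 4 := by
    rw [Equiv.sum_comp (xorEquiv β) (fun b => tent (UU b)), tent_sum L hL]
  have h2 : T = ∑ b : Fin L → Bool, (1 - c - WW (notEquiv L b)) * tent (UU (xorEquiv β (notEquiv L b))) :=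
    (Equiv.sum_comp (notEquiv L) (fun b => (1 - c - WW b) * tent (UU (xorEquiv β b)))).symm
  have hM : (0:ℝ) < 1 / 2 ^ L := by positivity
  have hx : ∀ b, UU (xorEquiv β (notEquiv L b)) = 1 - 1 / 2 ^ L - UU (xorEquiv β b) := by
    intro b
    rw [← UU_not]
    congr 1
    funext i
    simp only [xorEquiv, notEquiv, Equiv.coe_fn_mk]
    cases b i <;> cases β i <;> rfl
  have h3 : 2 * T = (1 + 1 / 2 ^ L - 2 * c) * (2 ^ L / 4) + ∑ b : Fin L → Bool,
      (1 - c - WW (notEquiv L b)) * (tent (UU (xorEquiv β (notEquiv L b))) - tent (UU (xorEquiv β b))) := by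
    rw [two_mul]
    nth_rw 2 [h2]
    rw [hT, ← hs, Finset.mul_sum, ← Finset.sum_add_distrib, ← Finset.sum_add_distrib]
    refine Finset.sum_congr rfl fun b _ => ?_
    have : WW (notEquiv L b) = 1 - 1 / 2 ^ L - WW b := WW_not b
    rw [this]; ring
  have h4 : |∑ b : Fin L → Bool,
      (1 - c - WW (notEquiv L b)) * (tent (UU (xorEquiv β (notEquiv L b))) - tent (UU (xorEquiv β b)))| ≤ 1 := by
    refine (Finset.abs_sum_le_sum_abs _ _).trans ?_
    have : ∀ b ∈ (Finset.univ : Finset (Fin L → Bool)), |(1 - c - WW (notEquiv L b)) * (tent (UU (xorEquiv β (notEquiv L b))) - tent (UU (xorEquiv β b)))| ≤ 1 / 2 ^ L := by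
      intro b _
      rw [abs_mul, hx]
      have e1 := tent_lip (UU (xorEquiv β b)) (1 / 2 ^ L) hM.le
      have e2 : |1 - c - WW (notEquiv L b)| ≤ 1 := by
        have := WW_nonneg (notEquiv L b)
        have := WW_le (notEquiv L b)
        rw [abs_le]; constructor <;> linarith
      calc _ ≤ 1 * (1 / 2 ^ L : ℝ) := mul_le_mul e2 e1 (abs_nonneg _) zero_le_one
        _ = _ := one_mul _
    refine (Finset.sum_le_sum this).trans ?_
    simp
  have hp : (0:ℝ) < 2 ^ L := by positivity
  have h5 : |(1 / 2 ^ L - 2 * c) * (2 ^ L / 4 : ℝ)| ≤ 1 / 4 := by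
    rw [abs_mul, abs_of_pos (by positivity : (0:ℝ) < 2 ^ L / 4)]
    have : |1 / 2 ^ L - 2 * c| ≤ 1 / 2 ^ L := by rw [abs_le]; constructor <;> linarith
    calc _ ≤ (1 / 2 ^ L : ℝ) * (2 ^ L / 4) := by gcongr
      _ = _ := by field_simp
  rw [abs_le] at *
  constructor <;> linarith [h4.1, h4.2, h5.1, h5.2]

noncomputable def FF (p a b : ℝ) : ℝ := max (b - max a p) 0
noncomputable def HH (k m : ℕ) (p : ℝ) : ℝ :=
  FF p ((2 * m + 1 : ℝ) / 2 ^ (k + 1)) ((2 * m + 2 : ℝ) / 2 ^ (k + 1))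
   - FF p ((2 * m : ℝ) / 2 ^ (k + 1)) ((2 * m + 1 : ℝ) / 2 ^ (k + 1))

lemma FF_scale (p a b s : ℝ) (hs : 0 < s) : FF (p / s) (a / s) (b / s) = FF p a b / s := by
  unfold FF
  rw [max_div_div_right hs.le, ← sub_div]
  nth_rw 1 [← zero_div s]
  rw [max_div_div_right hs.le]

lemma FF_lo (p a b : ℝ) (h : p ≤ a) (h' : a ≤ b) : FF p a b = b - a := by
  rw [FF, max_eq_left h, max_eq_left (by linarith)]
lemma FF_mid (p a b : ℝ) (h : a ≤ p) (h' : p ≤ b) : FF p a b = b - p := by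
  rw [FF, max_eq_right h, max_eq_left (by linarith)]
lemma FF_hi (p a b : ℝ) (h : a ≤ p) (h' : b ≤ p) : FF p a b = 0 := by
  rw [FF, max_eq_right h, max_eq_right (by linarith)]

lemma HH_val (k m e : ℕ) (u : ℝ) (h0 : 0 ≤ u) (h1 : u < 1) :
    HH k m ((e:ℝ) / 2 ^ k + u / 2 ^ k) = if e = m then tent u / 2 ^ k else 0 := by
  have hs : (0:ℝ) < 2 ^ (k + 1) := by positivity
  have hp : (e:ℝ) / 2 ^ k + u / 2 ^ k = (2 * e + 2 * u) / 2 ^ (k + 1) := by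
    rw [pow_succ]; field_simp
  have ht : tent u / 2 ^ k = (2 * tent u) / 2 ^ (k + 1) := by
    rw [pow_succ]; field_simp
  unfold HH
  rw [hp, FF_scale _ _ _ _ hs, FF_scale _ _ _ _ hs, ← sub_div, ht]
  rcases lt_trichotomy e m with h | h | h
  · have : (e:ℝ) + 1 ≤ m := by exact_mod_cast h
    rw [if_neg h.ne, FF_lo _ _ _ (by linarith) (by linarith), FF_lo _ _ _ (by linarith) (by linarith)]
    ring
  · subst h
    rw [if_pos rfl]
    unfold tent
    congr 1
    rcases le_total u (1/2) with h | h
    · rw [FF_lo _ _ _ (by linarith) (by linarith), FF_mid _ _ _ (by linarith) (by linarith),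
        min_eq_left (by linarith)]
      ring
    · rw [FF_mid _ _ _ (by linarith) (by linarith), FF_hi _ _ _ (by linarith) (by linarith),
        min_eq_right (by linarith)]
      ring
  · have : (m:ℝ) + 1 ≤ e := by exact_mod_cast h
    rw [if_neg h.ne', FF_hi _ _ _ (by linarith) (by linarith), FF_hi _ _ _ (by linarith) (by linarith)]
    ring

lemma sum_bound (n : ℕ) (σ : Fin n → Bool) (k : ℕ) (hk : k < n) (m : ℕ) (hm : m < 2 ^ k) :
    |(∑ t : Fin n → Bool, (1 - WW t) * HH k m (UU (xorEquiv σ t))) / 2 ^ n - 1 / 2 ^ (2 * k + 3)|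
      ≤ 1 / 2 ^ (n + k) := by
  obtain ⟨L, rfl⟩ : ∃ l, n = k + l := ⟨n - k, by omega⟩
  have hL : 0 < L := by omega
  obtain ⟨e, he⟩ := exists_enc k
  set α : Fin k → Bool := fun i => σ (Fin.castAdd L i)
  set β : Fin L → Bool := fun i => σ (Fin.natAdd k i)
  have hx : ∀ a b, xorEquiv σ (Fin.append a b) = Fin.append (xorEquiv α a) (xorEquiv β b) := by
    intro a b
    funext i
    refine Fin.addCases (fun i => ?_) (fun i => ?_) i <;> simp [xorEquiv, α, β]
  set a0 := (xorEquiv α).symm (e.symm ⟨m, hm⟩) with ha0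
  have key : ∑ t : Fin (k + L) → Bool, (1 - WW t) * HH k m (UU (xorEquiv σ t))
      = (∑ b : Fin L → Bool, (1 - WW a0 / 2 ^ L - WW b) * tent (UU (xorEquiv β b))) / 2 ^ k := by
    rw [← Equiv.sum_comp (Fin.appendEquiv k L), Fintype.sum_prod_type]
    have hterm : ∀ a b, (1 - WW (Fin.appendEquiv k L (a, b))) *
        HH k m (UU (xorEquiv σ (Fin.appendEquiv k L (a, b))))
        = if a = a0 then (1 - WW a / 2 ^ L - WW b) * tent (UU (xorEquiv β b)) / 2 ^ k else 0 := by
      intro a b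
      change (1 - WW (Fin.append a b)) * HH k m (UU (xorEquiv σ (Fin.append a b))) = _
      have hlt : UU (xorEquiv β b) < 1 := by
        have := UU_le (xorEquiv β b)
        have : (0:ℝ) < 1 / 2 ^ L := by positivity
        linarith
      rw [hx, UU_append, WW_append, he, HH_val _ _ _ _ (UU_nonneg _) hlt]
      have : ((e (xorEquiv α a) : ℕ) = m) ↔ a = a0 := by
        rw [ha0, Equiv.eq_symm_apply, Equiv.eq_symm_apply, Fin.ext_iff]
      simp only [this]
      split_ifs
      · ring
      · ring
    simp only [hterm]
    rw [Finset.sum_comm]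
    simp only [Finset.sum_ite_eq', Finset.mem_univ, if_true]
    rw [Finset.sum_div]
  have hb := inner_bound L hL β (WW a0 / 2 ^ L) (div_nonneg (WW_nonneg _) (by positivity)) (by
    have := WW_le a0
    have : (0:ℝ) < 1 / 2 ^ k := by positivity
    gcongr
    linarith)
  rw [key]
  set T := ∑ b : Fin L → Bool, (1 - WW a0 / 2 ^ L - WW b) * tent (UU (xorEquiv β b))
  have e1 : T / 2 ^ k / 2 ^ (k + L) - 1 / 2 ^ (2 * k + 3) = (T - 2 ^ L / 8) * (1 / 2 ^ (k + L + k)) := by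
    have a1 : (2:ℝ) ^ (k + L + k) = 2 ^ k * 2 ^ k * 2 ^ L := by ring
    have a2 : (2:ℝ) ^ (2 * k + 3) = 2 ^ k * 2 ^ k * 8 := by ring
    have a3 : (2:ℝ) ^ (k + L) = 2 ^ k * 2 ^ L := by ring
    rw [a1, a2, a3]
    field_simp
  rw [e1, abs_mul, abs_of_pos (by positivity : (0:ℝ) < 1 / 2 ^ (k + L + k))]
  calc _ ≤ 1 * (1 / 2 ^ (k + L + k) : ℝ) := by gcongr
    _ = _ := one_mul _

lemma sum_bound' (n : ℕ) (σ : Fin n → Bool) (k : ℕ) (hk : k < n) (m : ℕ) (hm : m < 2 ^ k) :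
    |(∑ t : Fin n → Bool, HH k m (WW t) * (1 - UU (xorEquiv σ t))) / 2 ^ n - 1 / 2 ^ (2 * k + 3)|
      ≤ 1 / 2 ^ (n + k) := by
  have h := sum_bound n (fun i => σ i.rev) k hk m hm
  have : ∑ t : Fin n → Bool, HH k m (WW t) * (1 - UU (xorEquiv σ t))
    = ∑ t : Fin n → Bool, (1 - WW t) * HH k m (UU (xorEquiv (fun i => σ i.rev) t)) := by
    symm
    rw [← Equiv.sum_comp ((xorEquiv σ).trans (Equiv.arrowCongr Fin.revPerm (Equiv.refl Bool)))]
    refine Finset.sum_congr rfl fun t _ => ?_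
    rw [mul_comm, WW_eq, WW_eq]
    congr 3
    · congr 1
      funext i
      simp [Equiv.arrowCongr, xorEquiv]
    · funext i
      simp [Equiv.arrowCongr, xorEquiv]
  rw [this]; exact h

lemma haar_neg_eq (x : ℝ) : haar1 (-1) 0 x = (Set.Ico (0:ℝ) 1).indicator (fun _ => 1) x := by
  simp [haar1, Set.indicator_apply]

lemma haar_eq (k m : ℕ) (x : ℝ) : haar1 (k:ℤ) m x =
    (Set.Ico ((2 * m : ℝ) / 2 ^ (k + 1)) ((2 * m + 1 : ℝ) / 2 ^ (k + 1))).indicator (fun _ => 1) x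
    - (Set.Ico ((2 * m + 1 : ℝ) / 2 ^ (k + 1)) ((2 * m + 2 : ℝ) / 2 ^ (k + 1))).indicator (fun _ => 1) x := by
  have h : ¬ ((k:ℤ) = -1) := by omega
  simp only [haar1, if_neg h, Int.toNat_natCast, Set.indicator_apply, Set.mem_Ico]
  split_ifs with h1 h2 <;> first | (exfalso; linarith [h1.1, h1.2, h2.1, h2.2]) | norm_num

lemma ind_int (a b : ℝ) : Integrable ((Set.Ico a b).indicator (fun _ => (1:ℝ))) (volume.restrict (Set.Icc (0:ℝ) 1)) :=
  (integrable_const (1:ℝ)).indicator measurableSet_Ico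

lemma ind_p_int (p : ℝ) (f : ℝ → ℝ) (hf : Integrable f (volume.restrict (Set.Icc (0:ℝ) 1))) :
    Integrable (fun x => (if p < x then (1:ℝ) else 0) * f x) (volume.restrict (Set.Icc (0:ℝ) 1)) := by
  have : (fun x => (if p < x then (1:ℝ) else 0) * f x) = (Set.Ioi p).indicator f := by
    funext x; simp [Set.indicator_apply]
  rw [this]; exact hf.indicator measurableSet_Ioi

lemma id_int_s8 (f : ℝ → ℝ) (hf : Integrable f (volume.restrict (Set.Icc (0:ℝ) 1))) :
    Integrable (fun x => x * f x) (volume.restrict (Set.Icc (0:ℝ) 1)) := by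
  refine hf.bdd_mul (c := 1) (by fun_prop) ?_
  filter_upwards [ae_restrict_mem measurableSet_Icc] with x hx
  rw [Real.norm_eq_abs, abs_of_nonneg hx.1]; exact hx.2

lemma int_p (p a b : ℝ) (ha : 0 ≤ a) (hb : b ≤ 1) :
    ∫ x in Set.Icc (0:ℝ) 1, (if p < x then (1:ℝ) else 0) * (Set.Ico a b).indicator (fun _ => (1:ℝ)) x = FF p a b := by
  have : (fun x => (if p < x then (1:ℝ) else 0) * (Set.Ico a b).indicator (fun _ => (1:ℝ)) x)
      = (Set.Ioi p ∩ Set.Ico a b).indicator (fun _ => 1) := by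
    funext x; simp only [Set.indicator_apply, Set.mem_inter_iff, Set.mem_Ioi]
    split_ifs <;> simp_all
  have hms : MeasurableSet (Set.Ioi p ∩ Set.Ico a b) := measurableSet_Ioi.inter measurableSet_Ico
  rw [this, setIntegral_indicator hms, setIntegral_const, smul_eq_mul, mul_one]
  have h2 : Set.Icc (0:ℝ) 1 ∩ (Set.Ioi p ∩ Set.Ico a b) = Set.Ioi p ∩ Set.Ico a b := by
    apply Set.inter_eq_right.2
    rintro x ⟨_, h⟩
    exact ⟨ha.trans h.1, h.2.le.trans hb⟩
  rw [h2, FF, ← Real.volume_real_Ico]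
  apply measureReal_congr
  have := (Ioi_ae_eq_Ici (a := p) (μ := volume)).inter (ae_eq_refl (Set.Ico a b))
  refine this.trans (Filter.EventuallyEq.of_eq ?_)
  change Set.Ici p ∩ Set.Ico a b = _
  ext x
  simp only [Set.mem_inter_iff, Set.mem_Ici, Set.mem_Ico, max_le_iff]
  tauto

lemma int_id (a b : ℝ) (ha : 0 ≤ a) (hab : a ≤ b) (hb : b ≤ 1) :
    ∫ x in Set.Icc (0:ℝ) 1, x * (Set.Ico a b).indicator (fun _ => (1:ℝ)) x = (b ^ 2 - a ^ 2) / 2 := by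
  have : (fun x => x * (Set.Ico a b).indicator (fun _ => (1:ℝ)) x)
      = (Set.Ico a b).indicator (fun x => x) := by
    funext x; simp [Set.indicator_apply]
  rw [this, setIntegral_indicator measurableSet_Ico]
  have h2 : Set.Icc (0:ℝ) 1 ∩ Set.Ico a b = Set.Ico a b := by
    apply Set.inter_eq_right.2
    rintro x h
    exact ⟨ha.trans h.1, h.2.le.trans hb⟩
  rw [h2, integral_Ico_eq_integral_Ioc, ← intervalIntegral.integral_of_le hab, integral_id]

lemma neg_int : Integrable (haar1 (-1) 0) (volume.restrict (Set.Icc (0:ℝ) 1)) := by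
  rw [funext haar_neg_eq]; exact ind_int _ _

lemma k_int (k m : ℕ) : Integrable (haar1 (k:ℤ) m) (volume.restrict (Set.Icc (0:ℝ) 1)) := by
  rw [funext (haar_eq k m)]; exact (ind_int _ _).sub (ind_int _ _)

lemma neg_p (p : ℝ) (h0 : 0 ≤ p) (h1 : p ≤ 1) :
    ∫ x in Set.Icc (0:ℝ) 1, (if p < x then (1:ℝ) else 0) * haar1 (-1) 0 x = 1 - p := by
  simp only [haar_neg_eq]
  rw [int_p _ _ _ le_rfl le_rfl, FF, max_eq_right h0, max_eq_left (by linarith)]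

lemma neg_id : ∫ x in Set.Icc (0:ℝ) 1, x * haar1 (-1) 0 x = 1 / 2 := by
  simp only [haar_neg_eq]
  rw [int_id _ _ le_rfl zero_le_one le_rfl]; norm_num

lemma top_le (k m : ℕ) (hm : m < 2 ^ k) : (2 * m + 2 : ℝ) / 2 ^ (k + 1) ≤ 1 := by
  rw [div_le_one (by positivity), pow_succ]
  have : (m:ℝ) + 1 ≤ 2 ^ k := by exact_mod_cast hm
  linarith

lemma k_p (k m : ℕ) (hm : m < 2 ^ k) (p : ℝ) :
    ∫ x in Set.Icc (0:ℝ) 1, (if p < x then (1:ℝ) else 0) * haar1 (k:ℤ) m x = - HH k m p := by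
  have ht := top_le k m hm
  have hmid : (2 * m + 1 : ℝ) / 2 ^ (k + 1) ≤ (2 * m + 2 : ℝ) / 2 ^ (k + 1) := by
    gcongr; norm_num
  simp only [haar_eq, mul_sub]
  rw [integral_sub (ind_p_int _ _ (ind_int _ _)) (ind_p_int _ _ (ind_int _ _)),
    int_p _ _ _ (by positivity) (by linarith), int_p _ _ _ (by positivity) ht, HH]
  ring

lemma k_id (k m : ℕ) (hm : m < 2 ^ k) :
    ∫ x in Set.Icc (0:ℝ) 1, x * haar1 (k:ℤ) m x = - (1 / 2 ^ (2 * k + 2)) := by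
  have ht := top_le k m hm
  have hmid : (2 * m + 1 : ℝ) / 2 ^ (k + 1) ≤ (2 * m + 2 : ℝ) / 2 ^ (k + 1) := by
    gcongr; norm_num
  have hmid' : (2 * m : ℝ) / 2 ^ (k + 1) ≤ (2 * m + 1 : ℝ) / 2 ^ (k + 1) := by
    gcongr; norm_num
  simp only [haar_eq, mul_sub]
  rw [integral_sub (id_int_s8 _ (ind_int _ _)) (id_int_s8 _ (ind_int _ _)),
    int_id _ _ (by positivity) hmid' (by linarith), int_id _ _ (by positivity) hmid ht]
  have : (2:ℝ) ^ (2 * k + 2) = 2 ^ (k + 1) * 2 ^ (k + 1) := by ring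
  rw [this]
  field_simp
  ring

lemma coeff_eq {ι : Type*} [Fintype ι] (P : ι → ℝ × ℝ) (hP1 : ∀ i, 0 ≤ (P i).1) (hP2 : ∀ i, 0 ≤ (P i).2)
    (j : ℤ × ℤ) (m : ℕ × ℕ)
    (h1 : Integrable (haar1 j.1 m.1) (volume.restrict (Set.Icc (0:ℝ) 1)))
    (h2 : Integrable (haar1 j.2 m.2) (volume.restrict (Set.Icc (0:ℝ) 1))) :
    haarCoeff P j m = (∑ i, (∫ x in Set.Icc (0:ℝ) 1, (if (P i).1 < x then (1:ℝ) else 0) * haar1 j.1 m.1 x) *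
      (∫ x in Set.Icc (0:ℝ) 1, (if (P i).2 < x then (1:ℝ) else 0) * haar1 j.2 m.2 x)) / Fintype.card ι
      - (∫ x in Set.Icc (0:ℝ) 1, x * haar1 j.1 m.1 x) * (∫ x in Set.Icc (0:ℝ) 1, x * haar1 j.2 m.2 x) := by
  have hvol : (volume.restrict (Set.Icc (0 : ℝ × ℝ) 1)) =
      (volume.restrict (Set.Icc (0:ℝ) 1)).prod (volume.restrict (Set.Icc (0:ℝ) 1)) := by
    rw [Measure.prod_restrict, Set.Icc_prod_eq, Measure.volume_eq_prod]; rfl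
  have hfun : ∀ t, localDisc P t * haar2 j m t =
      (∑ i, ((if (P i).1 < t.1 then (1:ℝ) else 0) * haar1 j.1 m.1 t.1) *
        ((if (P i).2 < t.2 then (1:ℝ) else 0) * haar1 j.2 m.2 t.2)) / Fintype.card ι
      - (t.1 * haar1 j.1 m.1 t.1) * (t.2 * haar1 j.2 m.2 t.2) := by
    intro t
    have hc : (countIn P t : ℝ) = ∑ i, (if (P i).1 < t.1 then (1:ℝ) else 0) * (if (P i).2 < t.2 then (1:ℝ) else 0) := by
      unfold countIn
      rw [Finset.card_filter]
      push_cast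
      refine Finset.sum_congr rfl fun i _ => ?_
      simp only [hP1, hP2, true_and]
      split_ifs <;> simp_all
    have : ∑ i, ((if (P i).1 < t.1 then (1:ℝ) else 0) * haar1 j.1 m.1 t.1) *
        ((if (P i).2 < t.2 then (1:ℝ) else 0) * haar1 j.2 m.2 t.2) = (countIn P t : ℝ) * (haar1 j.1 m.1 t.1 * haar1 j.2 m.2 t.2) := by
      rw [hc, Finset.sum_mul]
      refine Finset.sum_congr rfl fun i _ => ?_
      ring
    rw [this, localDisc, haar2]
    ring
  unfold haarCoeff
  simp only [hfun]
  rw [hvol, integral_sub, integral_div, integral_finsetSum]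
  · congr 1
    · congr 1
      refine Finset.sum_congr rfl fun i _ => ?_
      exact integral_prod_mul (fun x => (if (P i).1 < x then (1:ℝ) else 0) * haar1 j.1 m.1 x)
        (fun x => (if (P i).2 < x then (1:ℝ) else 0) * haar1 j.2 m.2 x)
    · exact integral_prod_mul (fun x => x * haar1 j.1 m.1 x) (fun x => x * haar1 j.2 m.2 x)
  · intro i _
    exact (ind_p_int _ _ h1).mul_prod (ind_p_int _ _ h2)
  · refine Integrable.div_const (integrable_finsetSum _ fun i _ => ?_) _
    exact (ind_p_int _ _ h1).mul_prod (ind_p_int _ _ h2)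
  · exact (id_int_s8 _ h1).mul_prod (id_int_s8 _ h2)

/-- Haar coefficients of the local discrepancy of `R_{n,σ}` for `j = (-1,k)` or
`j = (k,-1)` with `0 ≤ k < n`: `|μ_{j,m}| ≤ 2^{-(n+k)}`. -/
theorem statement8 (n : ℕ) (hn : 0 < n) (σ : Fin n → Bool)
    (k : ℕ) (hk : k < n) (m : ℕ) (hm : m < 2 ^ k) :
    |haarCoeff (hammersleyShifted n σ) (-1, (k : ℤ)) (0, m)| ≤ 1 / 2 ^ (n + k) ∧
    |haarCoeff (hammersleyShifted n σ) ((k : ℤ), -1) (m, 0)| ≤ 1 / 2 ^ (n + k) := by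
  have hP1 : ∀ t, (hammersleyShifted n σ t).1 = WW t := fun t => rfl
  have hP2 : ∀ t, (hammersleyShifted n σ t).2 = UU (xorEquiv σ t) := fun t => rfl
  have hcard : ((Fintype.card (Fin n → Bool) : ℕ) : ℝ) = 2 ^ n := by simp
  have hpos : (0:ℝ) < 1 / 2 ^ n := by positivity
  have hpw : (1:ℝ) / 2 ^ (2 * k + 3) = 1 / 2 * (1 / 2 ^ (2 * k + 2)) := by
    rw [pow_succ]; field_simp
  have hW1 : ∀ t : Fin n → Bool, WW t ≤ 1 := fun t => by linarith [WW_le t]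
  have hU1 : ∀ t : Fin n → Bool, UU t ≤ 1 := fun t => by linarith [UU_le t]
  constructor
  · rw [coeff_eq _ (fun t => by rw [hP1]; exact WW_nonneg _) (fun t => by rw [hP2]; exact UU_nonneg _)
      _ _ neg_int (k_int k m)]
    simp only [hP1, hP2, hcard, neg_id, k_id k m hm, k_p k m hm]
    simp only [neg_p _ (WW_nonneg _) (hW1 _), mul_neg, Finset.sum_neg_distrib]
    have := sum_bound n σ k hk m hm
    rw [← abs_neg] at this
    convert this using 2
    rw [hpw]; ring
  · rw [coeff_eq _ (fun t => by rw [hP1]; exact WW_nonneg _) (fun t => by rw [hP2]; exact UU_nonneg _)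
      _ _ (k_int k m) neg_int]
    simp only [hP1, hP2, hcard, neg_id, k_id k m hm, k_p k m hm]
    simp only [neg_p _ (UU_nonneg _) (hU1 _), neg_mul, Finset.sum_neg_distrib]
    have := sum_bound' n σ k hk m hm
    rw [← abs_neg] at this
    convert this using 2
    rw [hpw]; ring
end
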